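/- arXiv:2506.14258 — 4 statements merged into one kernel-verified Lean document; each statement's English description precedes it below -/
import Mathlib

section
/- For every m > 0 there exists a constant γ ≥ 1, depending only on m, such that for all real numbers k > 0 and u ≥ k one has (1/γ)·(k+u)^{1/m−1}·(u−k)² ≤ (1/m)·∫_k^u z^{1/m−1}(z−k) dz ≤ γ·(k+u)^{1/m−1}·(u−k)². -/
/-!
Put `a = 1 / m - 1 > -1`. The integrand `z ^ a * (z - k) = z ^ (a + 1) * (1 - k / z)` is a product
of nonnegative increasing functions on `[k, ∞)`, hence increasing. Its integral over `[k, u]` is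
therefore at most `u - k` times its value at `u`, and at least half of `u - k` times its value at
the midpoint of `[k, u]`. Both `u` and the midpoint are comparable to `k + u` up to a factor `2`,
and so are their `a`-th powers to `(k + u) ^ a` up to a factor `2 ^ |a|`.
-/

section MonotoneIntegrand

variable {f : ℝ → ℝ} {a b : ℝ}

theorem integral_le_sub_mul_of_monotoneOn (hab : a ≤ b) (hf : MonotoneOn f (Set.Icc a b)) :
    ∫ x in a..b, f x ≤ (b - a) * f b := by
  have hint : IntervalIntegrable f MeasureTheory.volume a b :=
    MonotoneOn.intervalIntegrable (by rwa [Set.uIcc_of_le hab])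
  simpa using intervalIntegral.integral_mono_on hab hint intervalIntegrable_const
    fun x hx ↦ hf hx (Set.right_mem_Icc.2 hab) hx.2

theorem sub_mul_le_integral_of_monotoneOn (hab : a ≤ b) (hf : MonotoneOn f (Set.Icc a b)) :
    (b - a) * f a ≤ ∫ x in a..b, f x := by
  have hint : IntervalIntegrable f MeasureTheory.volume a b :=
    MonotoneOn.intervalIntegrable (by rwa [Set.uIcc_of_le hab])
  simpa using intervalIntegral.integral_mono_on hab intervalIntegrable_const hint
    fun x hx ↦ hf (Set.left_mem_Icc.2 hab) hx hx.1

theorem sub_mul_add_sub_mul_le_integral_of_monotoneOn {c : ℝ} (hac : a ≤ c) (hcb : c ≤ b)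
    (hf : MonotoneOn f (Set.Icc a b)) :
    (c - a) * f a + (b - c) * f c ≤ ∫ x in a..b, f x := by
  have hleft : MonotoneOn f (Set.Icc a c) := hf.mono (Set.Icc_subset_Icc_right hcb)
  have hright : MonotoneOn f (Set.Icc c b) := hf.mono (Set.Icc_subset_Icc_left hac)
  rw [← intervalIntegral.integral_add_adjacent_intervals
    (MonotoneOn.intervalIntegrable (by rwa [Set.uIcc_of_le hac]))
    (MonotoneOn.intervalIntegrable (by rwa [Set.uIcc_of_le hcb]))]
  exact add_le_add (sub_mul_le_integral_of_monotoneOn hac hleft)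
    (sub_mul_le_integral_of_monotoneOn hcb hright)

end MonotoneIntegrand

theorem rpow_le_rpow_abs_mul_rpow {x y c : ℝ} (a : ℝ) (hx : 0 < x) (hy : 0 < y)
    (hxy : x ≤ c * y) (hyx : y ≤ c * x) : x ^ a ≤ c ^ |a| * y ^ a := by
  have hc : 0 < c := pos_of_mul_pos_left (hx.trans_le hxy) hy.le
  rcases le_total 0 a with ha | ha
  · calc x ^ a ≤ (c * y) ^ a := Real.rpow_le_rpow hx.le hxy ha
      _ = c ^ |a| * y ^ a := by rw [Real.mul_rpow hc.le hy.le, abs_of_nonneg ha]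
  · have hyx' : c⁻¹ * y ≤ x := (inv_mul_le_iff₀ hc).2 hyx
    calc x ^ a ≤ (c⁻¹ * y) ^ a := Real.rpow_le_rpow_of_nonpos (by positivity) hyx' ha
      _ = c ^ |a| * y ^ a := by
        rw [Real.mul_rpow (inv_pos.2 hc).le hy.le, Real.inv_rpow hc.le, ← Real.rpow_neg hc.le,
          abs_of_nonpos ha]

section PowerWeight

variable {a k u : ℝ}

theorem monotoneOn_rpow_mul_sub (ha : -1 ≤ a) (hk : 0 < k) :
    MonotoneOn (fun z ↦ z ^ a * (z - k)) (Set.Ici k) := by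
  have hfactor : ∀ z ∈ Set.Ici k, z ^ (a + 1) * (1 - k / z) = z ^ a * (z - k) := by
    intro z hz
    have hz0 : 0 < z := hk.trans_le hz
    rw [Real.rpow_add_one hz0.ne']
    field_simp
  have hpow : MonotoneOn (fun z : ℝ ↦ z ^ (a + 1)) (Set.Ici k) := fun z hz w _ hzw ↦
    Real.rpow_le_rpow (hk.le.trans hz) hzw (by linarith)
  have hratio : MonotoneOn (fun z ↦ 1 - k / z) (Set.Ici k) := fun z hz w _ hzw ↦
    sub_le_sub_left (div_le_div_of_nonneg_left hk.le (hk.trans_le hz) hzw) 1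
  exact (hpow.mul hratio (fun z hz ↦ Real.rpow_nonneg (hk.le.trans hz) _)
    (fun z hz ↦ sub_nonneg.2 (div_le_one_of_le₀ hz (hk.le.trans hz)))).congr hfactor

theorem integral_rpow_mul_sub_le (ha : -1 ≤ a) (hk : 0 < k) (hku : k ≤ u) :
    ∫ z in k..u, z ^ a * (z - k) ≤ 2 ^ |a| * ((k + u) ^ a * (u - k) ^ 2) := by
  have hmono := (monotoneOn_rpow_mul_sub ha hk).mono (Set.Icc_subset_Ici_self : Set.Icc k u ⊆ _)
  calc ∫ z in k..u, z ^ a * (z - k) ≤ (u - k) * (u ^ a * (u - k)) :=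
        integral_le_sub_mul_of_monotoneOn hku hmono
    _ = u ^ a * (u - k) ^ 2 := by ring
    _ ≤ 2 ^ |a| * (k + u) ^ a * (u - k) ^ 2 := by
        gcongr
        exact rpow_le_rpow_abs_mul_rpow a (by linarith) (by linarith) (by linarith) (by linarith)
    _ = 2 ^ |a| * ((k + u) ^ a * (u - k) ^ 2) := by ring

theorem le_integral_rpow_mul_sub (ha : -1 ≤ a) (hk : 0 < k) (hku : k ≤ u) :
    (k + u) ^ a * (u - k) ^ 2 ≤ 4 * 2 ^ |a| * ∫ z in k..u, z ^ a * (z - k) := by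
  have hmono := (monotoneOn_rpow_mul_sub ha hk).mono (Set.Icc_subset_Ici_self : Set.Icc k u ⊆ _)
  have hmid := sub_mul_add_sub_mul_le_integral_of_monotoneOn (c := (k + u) / 2)
    (by linarith) (by linarith) hmono
  calc (k + u) ^ a * (u - k) ^ 2 ≤ 2 ^ |a| * ((k + u) / 2) ^ a * (u - k) ^ 2 := by
        gcongr
        exact rpow_le_rpow_abs_mul_rpow a (by linarith) (by linarith) (by linarith) (by linarith)
    _ = 4 * 2 ^ |a| * (((k + u) / 2 - k) * (k ^ a * (k - k)) +
          (u - (k + u) / 2) * (((k + u) / 2) ^ a * ((k + u) / 2 - k))) := by ring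
    _ ≤ 4 * 2 ^ |a| * ∫ z in k..u, z ^ a * (z - k) := by gcongr

end PowerWeight

/-- Lemma 2.1 (upper-level version): for `m > 0` there is `γ ≥ 1` depending only
on `m` such that for all `0 < k ≤ u`,
`(1/γ)(k+u)^(1/m-1)(u-k)² ≤ (1/m)∫_k^u z^(1/m-1)(z-k) dz ≤ γ(k+u)^(1/m-1)(u-k)²`. -/
theorem g_plus_two_sided_bound (m : ℝ) (hm : 0 < m) :
    ∃ γ : ℝ, 1 ≤ γ ∧ ∀ k u : ℝ, 0 < k → k ≤ u →
      (1 / γ) * (k + u) ^ (1 / m - 1) * (u - k) ^ 2 ≤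
          (1 / m) * ∫ z in k..u, z ^ (1 / m - 1) * (z - k) ∧
      (1 / m) * ∫ z in k..u, z ^ (1 / m - 1) * (z - k) ≤
          γ * (k + u) ^ (1 / m - 1) * (u - k) ^ 2 := by
  have ha : -1 ≤ 1 / m - 1 := by linarith [one_div_pos.2 hm]
  generalize 1 / m - 1 = a at ha ⊢
  let γ : ℝ := max 1 (max (4 * 2 ^ |a| * m) (1 / m * 2 ^ |a|))
  have hγ : 1 ≤ γ := le_max_left _ _
  have hγ_lower : 4 * 2 ^ |a| * m ≤ γ := (le_max_left _ _).trans (le_max_right _ _)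
  have hγ_upper : 1 / m * 2 ^ |a| ≤ γ := (le_max_right _ _).trans (le_max_right _ _)
  refine ⟨γ, hγ, fun k u hk hku ↦ ?_⟩
  have hlower := le_integral_rpow_mul_sub ha hk hku
  have hupper := integral_rpow_mul_sub_le ha hk hku
  set I := ∫ z in k..u, z ^ a * (z - k)
  have hX : 0 ≤ (k + u) ^ a * (u - k) ^ 2 := by have := hk.trans_le hku; positivity
  have hI : 0 ≤ I := nonneg_of_mul_nonneg_right (hX.trans hlower) (by positivity)
  rw [mul_assoc, mul_assoc γ, one_div_mul_eq_div, div_le_iff₀' (one_pos.trans_le hγ)]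
  constructor
  · calc (k + u) ^ a * (u - k) ^ 2 ≤ 4 * 2 ^ |a| * I := hlower
      _ = 4 * 2 ^ |a| * m * (1 / m * I) := by field_simp
      _ ≤ γ * (1 / m * I) := by gcongr
  · calc 1 / m * I ≤ 1 / m * (2 ^ |a| * ((k + u) ^ a * (u - k) ^ 2)) := by gcongr
      _ = 1 / m * 2 ^ |a| * ((k + u) ^ a * (u - k) ^ 2) := by ring
      _ ≤ γ * ((k + u) ^ a * (u - k) ^ 2) := by gcongr
end

section
/- For every m > 0 there exists a constant γ ≥ 1, depending only on m, such that for all real numbers k > 0 and 0 ≤ u ≤ k one has (1/γ)·(k+u)^{1/m−1}·(k−u)² ≤ (1/m)·∫_u^k z^{1/m−1}(k−z) dz ≤ γ·(k+u)^{1/m−1}·(k−u)². -/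
/-! Substituting `z = (1 - t) u + t k` turns `∫_u^k z^p (k - z) dz` into `(k - u)²` times the
integral of `z^p (1 - t)` over `0 < t < 1`. On that range `t (1 - t) (k + u) ≤ z ≤ k + u`, so
`z^p / (k + u)^p` lies between `(t (1 - t))^|p|` and `1 + (t (1 - t))^p`. Both functions are
integrable against `1 - t` because `p = 1 / m - 1 > -1`, and their integrals depend on `p` only. -/

open MeasureTheory Set

section Power

variable {a s w z : ℝ}

lemma rpow_abs_le_rpow_of_le_of_le_one (ha : 0 < a) (haw : a ≤ w) (hw : w ≤ 1) (p : ℝ) :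
    a ^ |p| ≤ w ^ p :=
  calc a ^ |p| ≤ w ^ |p| := Real.rpow_le_rpow ha.le haw (abs_nonneg p)
    _ ≤ w ^ p := Real.rpow_le_rpow_of_exponent_ge (ha.trans_le haw) hw (le_abs_self p)

lemma rpow_le_one_add_rpow_of_le_of_le_one (ha : 0 < a) (haw : a ≤ w) (hw : w ≤ 1) (p : ℝ) :
    w ^ p ≤ 1 + a ^ p := by
  rcases le_total 0 p with hp | hp
  · exact (Real.rpow_le_one (ha.le.trans haw) hw hp).trans
      (le_add_of_nonneg_right (Real.rpow_nonneg ha.le p))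
  · exact (Real.rpow_le_rpow_of_nonpos ha haw hp).trans (le_add_of_nonneg_left zero_le_one)

lemma rpow_mem_Icc_of_mem_Icc_mul (ha : 0 < a) (hs : 0 < s) (hz : z ∈ Icc (a * s) s) (p : ℝ) :
    z ^ p ∈ Icc (s ^ p * a ^ |p|) (s ^ p * (1 + a ^ p)) := by
  have haz : a ≤ z / s := (le_div_iff₀ hs).2 hz.1
  have hz_le_one : z / s ≤ 1 := (div_le_one hs).2 hz.2
  have hz_rpow : z ^ p = s ^ p * (z / s) ^ p := by
    rw [← Real.mul_rpow hs.le (ha.le.trans haz), mul_div_cancel₀ z hs.ne']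
  rw [hz_rpow]
  exact ⟨by gcongr; exact rpow_abs_le_rpow_of_le_of_le_one ha haz hz_le_one p,
    by gcongr; exact rpow_le_one_add_rpow_of_le_of_le_one ha haz hz_le_one p⟩

end Power

section Segment

variable {f : ℝ → ℝ} {u k t : ℝ}

lemma convexComb_mem_Icc (hu : 0 ≤ u) (hk : 0 ≤ k) (ht : t ∈ Icc (0 : ℝ) 1) :
    (1 - t) * u + t * k ∈ Icc (t * (1 - t) * (k + u)) (k + u) := by
  have ht' : 0 ≤ 1 - t := sub_nonneg.2 ht.2
  constructor
  · nlinarith [mul_nonneg (sq_nonneg t) hk, mul_nonneg (sq_nonneg (1 - t)) hu]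
  · nlinarith [mul_nonneg ht.1 hu, mul_nonneg ht' hk]

lemma convexComb_rpow_mem_Icc (hu : 0 ≤ u) (hk : 0 ≤ k) (hku : 0 < k + u)
    (ht : t ∈ Ioo (0 : ℝ) 1) (p : ℝ) :
    ((1 - t) * u + t * k) ^ p ∈
      Icc ((k + u) ^ p * (t * (1 - t)) ^ |p|) ((k + u) ^ p * (1 + (t * (1 - t)) ^ p)) :=
  rpow_mem_Icc_of_mem_Icc_mul (mul_pos ht.1 (sub_pos.2 ht.2)) hku
    (convexComb_mem_Icc hu hk (Ioo_subset_Icc_self ht)) p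

lemma intervalIntegrable_comp_convexComb (hf : IntervalIntegrable f volume u k) :
    IntervalIntegrable (fun t => f ((1 - t) * u + t * k)) volume 0 1 := by
  rcases eq_or_ne u k with rfl | huk
  · simp only [← add_mul, sub_add_cancel, one_mul, intervalIntegrable_const]
  · have h := (hf.comp_add_right u).comp_mul_left (c := k - u)
    rw [sub_self, zero_div, div_self (sub_ne_zero.2 huk.symm)] at h
    exact h.congr fun t _ => congrArg f (by ring)

lemma integral_mul_sub_eq_sq_mul_integral_convexComb (f : ℝ → ℝ) (u k : ℝ) :
    ∫ z in u..k, f z * (k - z) =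
      (k - u) ^ 2 * ∫ t in (0 : ℝ)..1, f ((1 - t) * u + t * k) * (1 - t) := by
  have h_integrand (t : ℝ) : f ((k - u) * t + u) * (k - ((k - u) * t + u)) =
      (k - u) * (f ((1 - t) * u + t * k) * (1 - t)) := by
    rw [show (k - u) * t + u = (1 - t) * u + t * k by ring]
    ring
  have h_subst := intervalIntegral.smul_integral_comp_mul_add (a := 0) (b := 1)
    (fun z => f z * (k - z)) (k - u) u
  simp only [h_integrand, intervalIntegral.integral_const_mul, smul_eq_mul, mul_zero, zero_add,
    mul_one, sub_add_cancel] at h_subst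
  rw [← h_subst, sq, mul_assoc]

end Segment

section Integral

variable {p u k : ℝ}

lemma integral_mul_one_sub_mono {f g : ℝ → ℝ}
    (hf : IntervalIntegrable (fun t => f t * (1 - t)) volume 0 1)
    (hg : IntervalIntegrable (fun t => g t * (1 - t)) volume 0 1)
    (hfg : ∀ t ∈ Ioo (0 : ℝ) 1, f t ≤ g t) :
    ∫ t in (0 : ℝ)..1, f t * (1 - t) ≤ ∫ t in (0 : ℝ)..1, g t * (1 - t) :=
  intervalIntegral.integral_mono_on_of_le_Ioo zero_le_one hf hg fun t ht =>
    mul_le_mul_of_nonneg_right (hfg t ht) (sub_nonneg.2 ht.2.le)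

lemma intervalIntegrable_mul_one_sub_rpow_mul_one_sub (hp : -1 < p) :
    IntervalIntegrable (fun t : ℝ => (t * (1 - t)) ^ p * (1 - t)) volume 0 1 := by
  have hp' : 0 < p + 1 := by linarith
  have hcont : Continuous fun t : ℝ => (1 - t) ^ (p + 1) :=
    (continuous_const.sub continuous_id).rpow_const fun _ => Or.inr hp'.le
  have hint : IntervalIntegrable (fun t : ℝ => t ^ p * (1 - t) ^ (p + 1)) volume 0 1 :=
    (intervalIntegral.intervalIntegrable_rpow' hp).mul_continuousOn hcont.continuousOn
  refine hint.congr fun t ht => ?_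
  rw [uIoc_of_le zero_le_one] at ht
  have ht' : 0 ≤ 1 - t := sub_nonneg.2 ht.2
  rw [Real.mul_rpow ht.1.le ht', Real.rpow_add_one' ht' hp'.ne', mul_assoc]

lemma intervalIntegrable_one_add_mul_one_sub_rpow_mul_one_sub (hp : -1 < p) :
    IntervalIntegrable (fun t : ℝ => (1 + (t * (1 - t)) ^ p) * (1 - t)) volume 0 1 := by
  simp only [add_mul, one_mul]
  exact (by fun_prop : Continuous fun t : ℝ => 1 - t).intervalIntegrable 0 1 |>.add
    (intervalIntegrable_mul_one_sub_rpow_mul_one_sub hp)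

lemma integral_mul_one_sub_rpow_mul_one_sub_pos (hp : -1 < p) :
    0 < ∫ t in (0 : ℝ)..1, (t * (1 - t)) ^ p * (1 - t) := by
  refine intervalIntegral.intervalIntegral_pos_of_pos_on
    (intervalIntegrable_mul_one_sub_rpow_mul_one_sub hp) (fun t ht => ?_) zero_lt_one
  have ht' : 0 < 1 - t := sub_pos.2 ht.2
  exact mul_pos (Real.rpow_pos_of_pos (mul_pos ht.1 ht') p) ht'

lemma integral_convexComb_rpow_mem_Icc (hp : -1 < p) (hu : 0 ≤ u) (hk : 0 ≤ k)
    (hku : 0 < k + u) :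
    ∫ t in (0 : ℝ)..1, ((1 - t) * u + t * k) ^ p * (1 - t) ∈
      Icc ((k + u) ^ p * ∫ t in (0 : ℝ)..1, (t * (1 - t)) ^ |p| * (1 - t))
        ((k + u) ^ p * ∫ t in (0 : ℝ)..1, (1 + (t * (1 - t)) ^ p) * (1 - t)) := by
  have h_lower := (intervalIntegrable_mul_one_sub_rpow_mul_one_sub
    (neg_one_lt_zero.trans_le (abs_nonneg p))).const_mul ((k + u) ^ p)
  have h_upper := (intervalIntegrable_one_add_mul_one_sub_rpow_mul_one_sub hp).const_mul
    ((k + u) ^ p)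
  have h_mid : IntervalIntegrable (fun t => ((1 - t) * u + t * k) ^ p * (1 - t)) volume 0 1 :=
    (intervalIntegrable_comp_convexComb
      (intervalIntegral.intervalIntegrable_rpow' hp)).mul_continuousOn (by fun_prop)
  simp only [← mul_assoc] at h_lower h_upper
  simp only [← intervalIntegral.integral_const_mul, ← mul_assoc]
  exact ⟨integral_mul_one_sub_mono h_lower h_mid fun t ht =>
      (convexComb_rpow_mem_Icc hu hk hku ht p).1,
    integral_mul_one_sub_mono h_mid h_upper fun t ht =>
      (convexComb_rpow_mem_Icc hu hk hku ht p).2⟩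

lemma exists_integral_rpow_mul_sub_mem_Icc (hp : -1 < p) :
    ∃ A B : ℝ, 0 < A ∧ ∀ k u : ℝ, 0 ≤ k → 0 ≤ u → 0 < k + u →
      ∫ z in u..k, z ^ p * (k - z) ∈
        Icc (A * ((k + u) ^ p * (k - u) ^ 2)) (B * ((k + u) ^ p * (k - u) ^ 2)) := by
  refine ⟨∫ t in (0 : ℝ)..1, (t * (1 - t)) ^ |p| * (1 - t),
    ∫ t in (0 : ℝ)..1, (1 + (t * (1 - t)) ^ p) * (1 - t),
    integral_mul_one_sub_rpow_mul_one_sub_pos (neg_one_lt_zero.trans_le (abs_nonneg p)),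
    fun k u hk hu hku => ?_⟩
  obtain ⟨h_lower, h_upper⟩ := integral_convexComb_rpow_mem_Icc hp hu hk hku
  rw [integral_mul_sub_eq_sq_mul_integral_convexComb (· ^ p)]
  constructor
  · linear_combination (k - u) ^ 2 * h_lower
  · linear_combination (k - u) ^ 2 * h_upper

end Integral

lemma exists_one_le_one_div_le_and_le {a : ℝ} (ha : 0 < a) (b : ℝ) :
    ∃ γ : ℝ, 1 ≤ γ ∧ 1 / γ ≤ a ∧ b ≤ γ :=
  ⟨max 1 (max (1 / a) b), le_max_left _ _,
    one_div_le (by positivity) ha |>.2 (le_max_of_le_right (le_max_left _ _)),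
    le_max_of_le_right (le_max_right _ _)⟩

-- For `k ≤ u` the same integral equals `∫_k^u z^{1/m-1} (z - k) dz`, the energy density above `k`.
theorem g_minus_two_sided_bound_general (m : ℝ) (hm : 0 < m) :
    ∃ γ : ℝ, 1 ≤ γ ∧ ∀ k u : ℝ, 0 ≤ k → 0 ≤ u → 0 < k + u →
      (1 / γ) * (k + u) ^ (1 / m - 1) * (k - u) ^ 2 ≤
          (1 / m) * ∫ z in u..k, z ^ (1 / m - 1) * (k - z) ∧
      (1 / m) * ∫ z in u..k, z ^ (1 / m - 1) * (k - z) ≤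
          γ * (k + u) ^ (1 / m - 1) * (k - u) ^ 2 := by
  have hm_inv : 0 < 1 / m := one_div_pos.2 hm
  obtain ⟨A, B, hA, hAB⟩ := exists_integral_rpow_mul_sub_mem_Icc (p := 1 / m - 1) (by linarith)
  obtain ⟨γ, hγ_one, hγA, hγB⟩ :=
    exists_one_le_one_div_le_and_le (mul_pos hm_inv hA) (1 / m * B)
  refine ⟨γ, hγ_one, fun k u hk hu hku => ?_⟩
  obtain ⟨h_lower, h_upper⟩ := hAB k u hk hu hku
  have h_nonneg : 0 ≤ (k + u) ^ (1 / m - 1) * (k - u) ^ 2 := by positivity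
  set E := (k + u) ^ (1 / m - 1) * (k - u) ^ 2
  set I := ∫ z in u..k, z ^ (1 / m - 1) * (k - z)
  rw [mul_assoc, mul_assoc]
  constructor
  · calc 1 / γ * E ≤ 1 / m * A * E := by gcongr
      _ = 1 / m * (A * E) := mul_assoc _ _ _
      _ ≤ 1 / m * I := by gcongr
  · calc 1 / m * I ≤ 1 / m * (B * E) := by gcongr
      _ = 1 / m * B * E := (mul_assoc _ _ _).symm
      _ ≤ γ * E := by gcongr


/-- Lemma 2.1 (lower-level version): for `m > 0` there is `γ ≥ 1` depending only
on `m` such that for all `0 ≤ u ≤ k` with `k > 0`,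
`(1/γ)(k+u)^(1/m-1)(k-u)² ≤ (1/m)∫_u^k z^(1/m-1)(k-z) dz ≤ γ(k+u)^(1/m-1)(k-u)²`. -/
theorem g_minus_two_sided_bound (m : ℝ) (hm : 0 < m) :
    ∃ γ : ℝ, 1 ≤ γ ∧ ∀ k u : ℝ, 0 < k → 0 ≤ u → u ≤ k →
      (1 / γ) * (k + u) ^ (1 / m - 1) * (k - u) ^ 2 ≤
          (1 / m) * ∫ z in u..k, z ^ (1 / m - 1) * (k - z) ∧
      (1 / m) * ∫ z in u..k, z ^ (1 / m - 1) * (k - z) ≤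
          γ * (k + u) ^ (1 / m - 1) * (k - u) ^ 2 := by
  obtain ⟨γ, hγ, h⟩ := g_minus_two_sided_bound_general m hm
  exact ⟨γ, hγ, fun k u hk hu _ => h k u hk.le hu (add_pos_of_pos_of_nonneg hk hu)⟩
end

section
/- Let N ≥ 2, let p_1, …, p_N > 1 and α_1, …, α_N > 0 be real numbers, set α := (1/N)∑_{i=1}^N α_i and define p by 1/p := (1/N)∑_{i=1}^N 1/p_i, and assume p < N. Then there exists a constant c > 0, depending only on N, p_1, …, p_N, α_1, …, α_N, such that for every nonnegative function u : ℝ^N → ℝ with compact support for which each function x ↦ u(x)^{α_i} (i = 1,…,N) is continuously differentiable, one has (∫_{ℝ^N} u^{p̄} dx)^{(N−p)/N} ≤ c·∏_{i=1}^N (∫_{ℝ^N} |∂_i(u^{α_i})| ^{p_i} dx)^{p/(N p_i)}, where p̄ := Nαp/(N−p) and ∂_i denotes the partial derivative in the i-th coordinate direction. -/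
open MeasureTheory

/-!
Put `J = ∫ u^q` with `q = p̄`. Integrating `∂ᵢ (u^{aᵢ + q(1 - 1/pᵢ)})`, a multiple of
`u^{q(1 - 1/pᵢ)} ∂ᵢ(u^{aᵢ})`, along lines in direction `i` bounds `u^{aᵢ + q(1 - 1/pᵢ)}` by a
function that does not depend on `xᵢ`. The exponents `aᵢ + q(1 - 1/pᵢ)` add up to `(N - 1) q`, so
the Loomis–Whitney inequality bounds `J^(N - 1)` by the product of the full integrals of these
derivatives. Hölder's inequality splits off a factor `J^(1 - 1/pᵢ)` from each of them, and since
`∑ᵢ 1/pᵢ > 1` these factors are absorbed into the left-hand side.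
-/

open Function (update)
open scoped ENNReal

lemma ennreal_prod_rpow_of_nonneg {ι : Type*} (s : Finset ι) (x : ℝ≥0∞) {b : ι → ℝ}
    (hb : ∀ i ∈ s, 0 ≤ b i) : ∏ i ∈ s, x ^ b i = x ^ ∑ i ∈ s, b i := by
  induction s using Finset.cons_induction with
  | empty => simp
  | cons i s hi ih =>
    rw [Finset.forall_mem_cons] at hb
    rw [Finset.prod_cons, Finset.sum_cons, ih hb.2,
      ENNReal.rpow_add_of_nonneg _ _ hb.1 (Finset.sum_nonneg hb.2)]

lemma ennreal_rpow_sub_le_of_rpow_le_mul_rpow {x y : ℝ≥0∞} {b c : ℝ} (hx : x ≠ ∞) (hbc : c < b)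
    (h : x ^ b ≤ y * x ^ c) : x ^ (b - c) ≤ y := by
  rcases eq_or_ne x 0 with rfl | hx0
  · simp [ENNReal.zero_rpow_of_pos (sub_pos.2 hbc)]
  · rw [ENNReal.rpow_sub _ _ hx0 hx]
    exact ENNReal.div_le_of_le_mul h

section LoomisWhitney

variable {ι : Type*} [Fintype ι] [DecidableEq ι] {X : ι → Type*} [∀ i, MeasurableSpace (X i)]
  {μ : ∀ i, Measure (X i)} [∀ i, SigmaFinite (μ i)] {f : ι → (∀ i, X i) → ℝ≥0∞}

lemma lintegral_prod_lmarginal_insert_rpow_le [Nontrivial ι] (hf : ∀ i, Measurable (f i))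
    {s : Finset ι} {k : ι} (hk : k ∉ s) (x : ∀ i, X i) :
    ∫⁻ t, ∏ i, (∫⋯∫⁻_insert i s, f i ∂μ) (update x k t) ^ ((Fintype.card ι : ℝ) - 1)⁻¹ ∂μ k ≤
      ∏ i, (∫⋯∫⁻_insert i (insert k s), f i ∂μ) x ^ ((Fintype.card ι : ℝ) - 1)⁻¹ := by
  set e := ((Fintype.card ι : ℝ) - 1)⁻¹
  have hcard : (0 : ℝ) < Fintype.card ι - 1 := sub_pos.2 (mod_cast Fintype.one_lt_card)
  have hmeas : ∀ i, Measurable fun t => (∫⋯∫⁻_insert i s, f i ∂μ) (update x k t) :=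
    fun i => ((hf i).lmarginal μ).comp (measurable_update x)
  have hconst : ∀ t, (∫⋯∫⁻_insert k s, f k ∂μ) (update x k t) = (∫⋯∫⁻_insert k s, f k ∂μ) x :=
    lmarginal_update_of_mem μ (Finset.mem_insert_self k s) (f k) x
  have hweights : ∑ _i ∈ Finset.univ.erase k, e = 1 := by
    rw [Finset.sum_const, Finset.card_erase_of_mem (Finset.mem_univ k), Finset.card_univ,
      nsmul_eq_mul, Nat.cast_pred Fintype.card_pos, mul_inv_cancel₀ hcard.ne']
  simp only [← Finset.mul_prod_erase _ _ (Finset.mem_univ k), hconst, Finset.insert_idem]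
  rw [lintegral_const_mul _ (Finset.measurable_fun_prod _ fun i _ => (hmeas i).pow_const e)]
  gcongr
  calc ∫⁻ t, ∏ i ∈ Finset.univ.erase k, (∫⋯∫⁻_insert i s, f i ∂μ) (update x k t) ^ e ∂μ k
      ≤ ∏ i ∈ Finset.univ.erase k,
          (∫⁻ t, (∫⋯∫⁻_insert i s, f i ∂μ) (update x k t) ∂μ k) ^ e :=
        ENNReal.lintegral_prod_norm_pow_le _ (fun i _ => (hmeas i).aemeasurable) hweights
          fun _ _ => inv_nonneg.2 hcard.le
    _ = ∏ i ∈ Finset.univ.erase k, (∫⋯∫⁻_insert i (insert k s), f i ∂μ) x ^ e :=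
        Finset.prod_congr rfl fun i hi => by
          rw [Finset.insert_comm, lmarginal_insert (f i) (hf i)
            (by simp [hk, (Finset.ne_of_mem_erase hi).symm])]

lemma lmarginal_prod_lmarginal_singleton_rpow_le [Nontrivial ι] (hf : ∀ i, Measurable (f i))
    (s : Finset ι) :
    ∫⋯∫⁻_s, (fun x => ∏ i, (∫⋯∫⁻_{i}, f i ∂μ) x ^ ((Fintype.card ι : ℝ) - 1)⁻¹) ∂μ ≤
      fun x => ∏ i, (∫⋯∫⁻_insert i s, f i ∂μ) x ^ ((Fintype.card ι : ℝ) - 1)⁻¹ := by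
  induction s using Finset.induction with
  | empty => simp
  | insert k s hk ih =>
    intro x
    have hmeas : Measurable fun x =>
        ∏ i, (∫⋯∫⁻_{i}, f i ∂μ) x ^ ((Fintype.card ι : ℝ) - 1)⁻¹ :=
      Finset.measurable_fun_prod _ fun i _ => ((hf i).lmarginal μ).pow_const _
    rw [lmarginal_insert _ hmeas hk]
    exact (lintegral_mono fun t => ih _).trans (lintegral_prod_lmarginal_insert_rpow_le hf hk x)

/-- The Loomis–Whitney inequality, with the integral of `f i` along direction `i` in the role of the
function that does not depend on the `i`-th coordinate. -/
theorem lintegral_prod_lintegral_update_rpow_le [Nontrivial ι] (hf : ∀ i, Measurable (f i)) :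
    ∫⁻ x, ∏ i, (∫⁻ t, f i (update x i t) ∂μ i) ^ ((Fintype.card ι : ℝ) - 1)⁻¹ ∂Measure.pi μ ≤
      ∏ i, (∫⁻ x, f i x ∂Measure.pi μ) ^ ((Fintype.card ι : ℝ) - 1)⁻¹ := by
  rcases isEmpty_or_nonempty (∀ i, X i) with _ | ⟨⟨x⟩⟩
  · simp only [lintegral_of_isEmpty, zero_le]
  · simpa [lmarginal_singleton] using
      lmarginal_prod_lmarginal_singleton_rpow_le (μ := μ) hf Finset.univ x

lemma lintegral_rpow_rpow_le_prod_lintegral [Nontrivial ι] (hf : ∀ i, Measurable (f i))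
    {g : (∀ i, X i) → ℝ≥0∞} {s : ι → ℝ} (hs : ∀ i, 0 ≤ s i) {q : ℝ}
    (hsum : ∑ i, s i = q * (Fintype.card ι - 1))
    (hgf : ∀ i x, g x ^ s i ≤ ∫⁻ t, f i (update x i t) ∂μ i) :
    (∫⁻ x, g x ^ q ∂Measure.pi μ) ^ ((Fintype.card ι : ℝ) - 1) ≤
      ∏ i, ∫⁻ x, f i x ∂Measure.pi μ := by
  set e := ((Fintype.card ι : ℝ) - 1)⁻¹ with he
  have hcard : (0 : ℝ) < Fintype.card ι - 1 := sub_pos.2 (mod_cast Fintype.one_lt_card)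
  have he0 : 0 ≤ e := inv_nonneg.2 hcard.le
  have hprod : ∀ x, g x ^ q = ∏ i, (g x ^ s i) ^ e := fun x => by
    rw [ENNReal.prod_rpow_of_nonneg he0, ennreal_prod_rpow_of_nonneg _ _ fun i _ => hs i, hsum,
      ← ENNReal.rpow_mul, he, mul_inv_cancel_right₀ hcard.ne']
  rw [← ENNReal.le_rpow_inv_iff hcard, ← he, ← ENNReal.prod_rpow_of_nonneg he0]
  calc ∫⁻ x, g x ^ q ∂Measure.pi μ
      ≤ ∫⁻ x, ∏ i, (∫⁻ t, f i (update x i t) ∂μ i) ^ e ∂Measure.pi μ := by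
        simp only [hprod]
        gcongr with x i
        exact hgf i x
    _ ≤ ∏ i, (∫⁻ x, f i x ∂Measure.pi μ) ^ e := lintegral_prod_lintegral_update_rpow_le hf

end LoomisWhitney

section Integral

variable {α : Type*} [MeasurableSpace α] {μ : Measure α} {E : Type*} [NormedAddCommGroup E]

lemma lintegral_rpow_mul_le_rpow_mul_rpow {f g : α → ℝ≥0∞} (hf : AEMeasurable f μ)
    (hg : AEMeasurable g μ) {p : ℝ} (hp : 1 ≤ p) (q : ℝ) :
    ∫⁻ x, f x ^ (q * (1 - p⁻¹)) * g x ∂μ ≤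
      (∫⁻ x, f x ^ q ∂μ) ^ (1 - p⁻¹) * (∫⁻ x, g x ^ p ∂μ) ^ p⁻¹ := by
  have hp0 : 0 < p := zero_lt_one.trans_le hp
  simpa only [← ENNReal.rpow_mul, mul_inv_cancel₀ hp0.ne', ENNReal.rpow_one] using
    ENNReal.lintegral_mul_norm_pow_le (hf.pow_const q) (hg.pow_const p)
      (sub_nonneg.2 (inv_le_one_of_one_le₀ hp)) (inv_nonneg.2 hp0.le) (sub_add_cancel 1 p⁻¹)

lemma integral_norm_rpow_eq_toReal_lintegral {f : α → E} (hf : AEStronglyMeasurable f μ) {p : ℝ}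
    (hp : 0 ≤ p) : ∫ x, ‖f x‖ ^ p ∂μ = (∫⁻ x, ‖f x‖ₑ ^ p ∂μ).toReal := by
  have hmeas : AEStronglyMeasurable (fun x => ‖f x‖ ^ p) μ :=
    (hf.norm.aemeasurable.pow_const p).aestronglyMeasurable
  simpa only [Real.norm_rpow_of_nonneg (norm_nonneg _), norm_norm,
    Real.enorm_rpow_of_nonneg (norm_nonneg _) hp, enorm_norm] using
    integral_norm_eq_lintegral_enorm hmeas

lemma lintegral_enorm_rpow_ne_top [TopologicalSpace α]
    [OpensMeasurableSpace α] [IsFiniteMeasureOnCompacts μ] {f : α → E} (hf : Continuous f)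
    (hfc : HasCompactSupport f) {p : ℝ} (hp : 0 < p) : ∫⁻ x, ‖f x‖ₑ ^ p ∂μ ≠ ∞ := by
  simpa [ENNReal.toReal_ofReal hp.le] using (lintegral_rpow_enorm_lt_top_of_eLpNorm_lt_top
    (ENNReal.ofReal_pos.2 hp).ne' ENNReal.ofReal_ne_top
    (hf.memLp_of_hasCompactSupport (μ := μ) hfc).eLpNorm_lt_top).ne

end Integral

lemma continuous_of_continuous_rpow_const {α : Type*} [TopologicalSpace α] {u : α → ℝ} {a : ℝ}
    (hu0 : ∀ x, 0 ≤ u x) (ha : 0 < a) (hu : Continuous fun x => u x ^ a) : Continuous u := by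
  simpa only [Real.rpow_rpow_inv (hu0 _) ha.ne'] using
    hu.rpow_const fun _ => Or.inr (inv_nonneg.2 ha.le)

lemma hasCompactSupport_rpow_const {α : Type*} [TopologicalSpace α] {u : α → ℝ}
    (hu : HasCompactSupport u) {a : ℝ} (ha : 0 < a) : HasCompactSupport fun x => u x ^ a :=
  hu.comp_left (g := fun y : ℝ => y ^ a) (Real.zero_rpow ha.ne')

section Line

lemma enorm_rpow_le_mul_lintegral_rpow_mul_deriv {f : ℝ → ℝ} (hf0 : ∀ x, 0 ≤ f x)
    (hf : ContDiff ℝ 1 f) (hfc : HasCompactSupport f) {r : ℝ} (hr : 1 ≤ r) (x : ℝ) :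
    ‖f x‖ₑ ^ r ≤ ‖r‖ₑ * ∫⁻ t, ‖f t‖ₑ ^ (r - 1) * ‖deriv f t‖ₑ := by
  have hr0 : 0 < r := zero_lt_one.trans_le hr
  have hdiff : ContDiff ℝ 1 fun t => f t ^ r := hf.rpow_const_of_le (m := 1) (mod_cast hr)
  have hderiv : ∀ t, ‖deriv (fun t => f t ^ r) t‖ₑ =
      ‖r‖ₑ * (‖f t‖ₑ ^ (r - 1) * ‖deriv f t‖ₑ) := fun t => by
    rw [((hf.differentiable one_ne_zero t).hasDerivAt.rpow_const (Or.inr hr)).deriv, enorm_mul,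
      enorm_mul, Real.enorm_rpow_of_nonneg (hf0 t) (sub_nonneg.2 hr)]
    ring
  calc ‖f x‖ₑ ^ r = ‖f x ^ r‖ₑ := (Real.enorm_rpow_of_nonneg (hf0 x) hr0.le).symm
    _ ≤ ∫⁻ t in Set.Iic x, ‖deriv (fun t => f t ^ r) t‖ₑ :=
        (hasCompactSupport_rpow_const hfc hr0).enorm_le_lintegral_Ici_deriv hdiff x
    _ ≤ ∫⁻ t, ‖deriv (fun t => f t ^ r) t‖ₑ := setLIntegral_le_lintegral _ _
    _ = ‖r‖ₑ * ∫⁻ t, ‖f t‖ₑ ^ (r - 1) * ‖deriv f t‖ₑ := by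
        simp only [hderiv, lintegral_const_mul' _ _ enorm_ne_top]

variable {ι : Type*} [Fintype ι] [DecidableEq ι] {u : (ι → ℝ) → ℝ}

lemma enorm_rpow_add_le_mul_lintegral_update (hu0 : ∀ x, 0 ≤ u x) (huc : HasCompactSupport u)
    {a b : ℝ} (ha : 0 < a) (hb : 0 ≤ b) (hu : ContDiff ℝ 1 fun x => u x ^ a) (i : ι)
    (x : ι → ℝ) :
    ‖u x‖ₑ ^ (a + b) ≤ ‖1 + b / a‖ₑ * ∫⁻ t, ‖u (update x i t)‖ₑ ^ b *
      ‖fderiv ℝ (fun y => u y ^ a) (update x i t) (Pi.single i 1)‖ₑ := by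
  have hslice : ContDiff ℝ 1 fun t => u (update x i t) ^ a :=
    hu.comp (by convert! contDiff_update 1 x i)
  have hslicec : HasCompactSupport fun t => u (update x i t) ^ a :=
    (hasCompactSupport_rpow_const huc ha).comp_isClosedEmbedding (isClosedEmbedding_update x i)
  have hderiv : ∀ t, deriv (fun t => u (update x i t) ^ a) t =
      fderiv ℝ (fun y => u y ^ a) (update x i t) (Pi.single i 1) := fun t =>
    ((hu.differentiable one_ne_zero _).hasFDerivAt.comp_hasDerivAt t
      (hasDerivAt_update x i t)).deriv
  have hpow : ∀ y c, ‖u y ^ a‖ₑ ^ c = ‖u y‖ₑ ^ (a * c) := fun y c => by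
    rw [Real.enorm_rpow_of_nonneg (hu0 y) ha.le, ENNReal.rpow_mul]
  have h := enorm_rpow_le_mul_lintegral_rpow_mul_deriv
    (fun t => Real.rpow_nonneg (hu0 (update x i t)) a) hslice hslicec
    (le_add_of_nonneg_right (div_nonneg hb ha.le)) (x i)
  have hexp : a * (1 + b / a) = a + b := by field_simp
  have hexp' : a * (1 + b / a - 1) = b := by field_simp; ring
  simpa only [hderiv, hpow, hexp, hexp', Function.update_eq_self] using h

end Line

section Troisi

variable {ι : Type*} [Fintype ι] {a p : ι → ℝ}

/-- The critical exponent of the anisotropic embedding.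
With `∑ i, (p i)⁻¹ = N / p` and `α` the mean of the `a i`, this is `p̄ = N α p / (N - p)`. -/
noncomputable def troisiExponent (a p : ι → ℝ) : ℝ :=
  (∑ i, a i) / (∑ i, (p i)⁻¹ - 1)

/-- The constant of the embedding, before the power that normalizes the exponents: its `i`-th
factor is the exponent `r` in `(u ^ a i) ^ r = u ^ (a i + q * (1 - (p i)⁻¹))`, which appears when
this power is differentiated; here `q = troisiExponent a p`. -/
noncomputable def troisiConst (a p : ι → ℝ) : ℝ :=
  ∏ i, (1 + troisiExponent a p * (1 - (p i)⁻¹) / a i)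

lemma nontrivial_of_one_lt_sum_inv (hp : ∀ i, 1 ≤ p i) (hsum : 1 < ∑ i, (p i)⁻¹) :
    Nontrivial ι := by
  have hle : ∑ i, (p i)⁻¹ ≤ ∑ _i : ι, (1 : ℝ) :=
    Finset.sum_le_sum fun i _ => inv_le_one_of_one_le₀ (hp i)
  rw [← Fintype.one_lt_card_iff_nontrivial]
  exact_mod_cast hsum.trans_le (hle.trans_eq (by simp) : _ ≤ (Fintype.card ι : ℝ))

lemma troisiExponent_pos (ha : ∀ i, 0 < a i) (hp : ∀ i, 1 ≤ p i) (hsum : 1 < ∑ i, (p i)⁻¹) :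
    0 < troisiExponent a p :=
  have := nontrivial_of_one_lt_sum_inv hp hsum
  div_pos (Finset.sum_pos (fun i _ => ha i) Finset.univ_nonempty) (sub_pos.2 hsum)

lemma troisiExponent_mul_one_sub_inv_nonneg (ha : ∀ i, 0 < a i) (hp : ∀ i, 1 ≤ p i)
    (hsum : 1 < ∑ i, (p i)⁻¹) (i : ι) : 0 ≤ troisiExponent a p * (1 - (p i)⁻¹) :=
  mul_nonneg (troisiExponent_pos ha hp hsum).le (sub_nonneg.2 (inv_le_one_of_one_le₀ (hp i)))

lemma troisiConst_pos (ha : ∀ i, 0 < a i) (hp : ∀ i, 1 ≤ p i) (hsum : 1 < ∑ i, (p i)⁻¹) :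
    0 < troisiConst a p :=
  Finset.prod_pos fun i _ => add_pos_of_pos_of_nonneg one_pos
    (div_nonneg (troisiExponent_mul_one_sub_inv_nonneg ha hp hsum i) (ha i).le)

lemma sum_add_troisiExponent_mul (hsum : 1 < ∑ i, (p i)⁻¹) :
    ∑ i, (a i + troisiExponent a p * (1 - (p i)⁻¹)) =
      troisiExponent a p * (Fintype.card ι - 1) := by
  have hq : troisiExponent a p * (∑ i, (p i)⁻¹ - 1) = ∑ i, a i :=
    div_mul_cancel₀ _ (sub_pos.2 hsum).ne'
  rw [Finset.sum_add_distrib, ← hq, ← Finset.mul_sum, Finset.sum_sub_distrib, Finset.sum_const,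
    Finset.card_univ, nsmul_eq_mul]
  ring

variable [DecidableEq ι] {u : (ι → ℝ) → ℝ}

lemma continuous_fderiv_single {w : (ι → ℝ) → ℝ} (hw : ContDiff ℝ 1 w) (i : ι) :
    Continuous fun x => fderiv ℝ w x (Pi.single i 1) :=
  (hw.continuous_fderiv one_ne_zero).clm_apply continuous_const

lemma lintegral_troisiExponent_rpow_card_sub_one_le_prod (ha : ∀ i, 0 < a i) (hp : ∀ i, 1 ≤ p i)
    (hsum : 1 < ∑ i, (p i)⁻¹) (hu0 : ∀ x, 0 ≤ u x) (hu : Continuous u)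
    (huc : HasCompactSupport u) (hua : ∀ i, ContDiff ℝ 1 fun x => u x ^ a i) :
    (∫⁻ x, ‖u x‖ₑ ^ troisiExponent a p) ^ ((Fintype.card ι : ℝ) - 1) ≤
      ∏ i, (‖1 + troisiExponent a p * (1 - (p i)⁻¹) / a i‖ₑ *
        ((∫⁻ x, ‖u x‖ₑ ^ troisiExponent a p) ^ (1 - (p i)⁻¹) *
          (∫⁻ x, ‖fderiv ℝ (fun y => u y ^ a i) x (Pi.single i 1)‖ₑ ^ p i) ^ (p i)⁻¹)) := by
  have := nontrivial_of_one_lt_sum_inv hp hsum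
  set q := troisiExponent a p
  have hb : ∀ i, 0 ≤ q * (1 - (p i)⁻¹) := troisiExponent_mul_one_sub_inv_nonneg ha hp hsum
  have hmeas : ∀ i, Measurable fun x => ‖fderiv ℝ (fun y => u y ^ a i) x (Pi.single i 1)‖ₑ :=
    fun i => (continuous_fderiv_single (hua i) i).measurable.enorm
  have hline : ∀ i x, ‖u x‖ₑ ^ (a i + q * (1 - (p i)⁻¹)) ≤
      ∫⁻ t, ‖1 + q * (1 - (p i)⁻¹) / a i‖ₑ * (‖u (update x i t)‖ₑ ^ (q * (1 - (p i)⁻¹)) *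
        ‖fderiv ℝ (fun y => u y ^ a i) (update x i t) (Pi.single i 1)‖ₑ) := fun i x => by
    rw [lintegral_const_mul' _ _ enorm_ne_top]
    exact enorm_rpow_add_le_mul_lintegral_update hu0 huc (ha i) (hb i) (hua i) i x
  refine (lintegral_rpow_rpow_le_prod_lintegral
    (fun i => ((hu.measurable.enorm.pow_const _).mul (hmeas i)).const_mul _)
    (fun i => add_nonneg (ha i).le (hb i)) (sum_add_troisiExponent_mul hsum) hline).trans ?_
  gcongr with i
  rw [lintegral_const_mul' _ _ enorm_ne_top]
  gcongr
  exact lintegral_rpow_mul_le_rpow_mul_rpow hu.measurable.enorm.aemeasurable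
    (hmeas i).aemeasurable (hp i) q

theorem lintegral_troisiExponent_rpow_le (ha : ∀ i, 0 < a i) (hp : ∀ i, 1 ≤ p i)
    (hsum : 1 < ∑ i, (p i)⁻¹) (hu0 : ∀ x, 0 ≤ u x) (hu : Continuous u)
    (huc : HasCompactSupport u) (hua : ∀ i, ContDiff ℝ 1 fun x => u x ^ a i) :
    (∫⁻ x, ‖u x‖ₑ ^ troisiExponent a p) ^ (∑ i, (p i)⁻¹ - 1) ≤
      ‖troisiConst a p‖ₑ *
        ∏ i, (∫⁻ x, ‖fderiv ℝ (fun y => u y ^ a i) x (Pi.single i 1)‖ₑ ^ p i) ^ (p i)⁻¹ := by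
  set J := ∫⁻ x, ‖u x‖ₑ ^ troisiExponent a p
  have hJ : J ≠ ∞ := lintegral_enorm_rpow_ne_top hu huc (troisiExponent_pos ha hp hsum)
  have hJprod : ∏ i, J ^ (1 - (p i)⁻¹) = J ^ (Fintype.card ι - ∑ i, (p i)⁻¹) := by
    rw [ennreal_prod_rpow_of_nonneg _ _ fun i _ => sub_nonneg.2 (inv_le_one_of_one_le₀ (hp i))]
    simp [Finset.sum_sub_distrib]
  have hconst : ∏ i, ‖1 + troisiExponent a p * (1 - (p i)⁻¹) / a i‖ₑ = ‖troisiConst a p‖ₑ := by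
    simp only [troisiConst, enorm_eq_nnnorm, nnnorm_prod, ENNReal.ofNNReal_finsetProd]
  have hmain := lintegral_troisiExponent_rpow_card_sub_one_le_prod ha hp hsum hu0 hu huc hua
  rw [Finset.prod_mul_distrib, Finset.prod_mul_distrib, hJprod, hconst,
    mul_left_comm, mul_comm] at hmain
  have hexp : (Fintype.card ι : ℝ) - 1 - (Fintype.card ι - ∑ i, (p i)⁻¹) = ∑ i, (p i)⁻¹ - 1 := by
    ring
  rw [← hexp]
  exact ennreal_rpow_sub_le_of_rpow_le_mul_rpow hJ (by linarith) hmain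

theorem integral_troisiExponent_rpow_le (ha : ∀ i, 0 < a i) (hp : ∀ i, 1 ≤ p i)
    (hsum : 1 < ∑ i, (p i)⁻¹) (hu0 : ∀ x, 0 ≤ u x) (huc : HasCompactSupport u)
    (hua : ∀ i, ContDiff ℝ 1 fun x => u x ^ a i) :
    (∫ x, u x ^ troisiExponent a p) ^ (∑ i, (p i)⁻¹ - 1) ≤
      troisiConst a p *
        ∏ i, (∫ x, |fderiv ℝ (fun y => u y ^ a i) x (Pi.single i 1)| ^ p i) ^ (p i)⁻¹ := by
  have hp0 : ∀ i, 0 < p i := fun i => zero_lt_one.trans_le (hp i)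
  have hu : Continuous u := by
    obtain ⟨i, -⟩ := nontrivial_of_one_lt_sum_inv hp hsum
    exact continuous_of_continuous_rpow_const hu0 (ha i) (hua i).continuous
  have hD : ∀ i, Continuous fun x => fderiv ℝ (fun y => u y ^ a i) x (Pi.single i 1) :=
    fun i => continuous_fderiv_single (hua i) i
  have hDc : ∀ i, HasCompactSupport fun x => fderiv ℝ (fun y => u y ^ a i) x (Pi.single i 1) :=
    fun i => (hasCompactSupport_rpow_const huc (ha i)).fderiv_apply ℝ _
  have hJ : ∫ x, u x ^ troisiExponent a p = (∫⁻ x, ‖u x‖ₑ ^ troisiExponent a p).toReal := by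
    rw [← integral_norm_rpow_eq_toReal_lintegral hu.aestronglyMeasurable
      (troisiExponent_pos ha hp hsum).le]
    simp only [Real.norm_of_nonneg (hu0 _)]
  have hA : ∀ i, ∫ x, |fderiv ℝ (fun y => u y ^ a i) x (Pi.single i 1)| ^ p i =
      (∫⁻ x, ‖fderiv ℝ (fun y => u y ^ a i) x (Pi.single i 1)‖ₑ ^ p i).toReal := fun i =>
    integral_norm_rpow_eq_toReal_lintegral (hD i).aestronglyMeasurable (hp0 i).le
  have hfin : ‖troisiConst a p‖ₑ * ∏ i, (∫⁻ x, ‖fderiv ℝ (fun y => u y ^ a i) x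
      (Pi.single i 1)‖ₑ ^ p i) ^ (p i)⁻¹ ≠ ∞ :=
    ENNReal.mul_ne_top enorm_ne_top <| ENNReal.prod_ne_top fun i _ =>
      ENNReal.rpow_ne_top_of_nonneg (inv_nonneg.2 (hp0 i).le)
        (lintegral_enorm_rpow_ne_top (hD i) (hDc i) (hp0 i))
  have h := ENNReal.toReal_mono hfin
    (lintegral_troisiExponent_rpow_le ha hp hsum hu0 hu huc hua)
  simpa only [hJ, hA, ENNReal.toReal_mul, ENNReal.toReal_prod, ENNReal.toReal_rpow,
    toReal_enorm, Real.norm_of_nonneg (troisiConst_pos ha hp hsum).le] using h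

end Troisi

lemma pos_and_sum_inv_eq_card_div {ι : Type*} [Fintype ι] {pv : ι → ℝ} (hpv : ∀ i, 0 < pv i)
    {p : ℝ} (hp : 1 / p = (1 / (Fintype.card ι : ℝ)) * ∑ i, 1 / pv i)
    (hpN : p < Fintype.card ι) :
    0 < p ∧ ∑ i, (pv i)⁻¹ = Fintype.card ι / p := by
  have hι : Nonempty ι := by
    by_contra! hι
    have hp0 : p = 0 := by simpa using hp
    exact (hp0 ▸ hpN).ne (by simp)
  have hN : (0 : ℝ) < Fintype.card ι := mod_cast Fintype.card_pos
  have hsum : 0 < ∑ i, (pv i)⁻¹ :=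
    Finset.sum_pos (fun i _ => inv_pos.2 (hpv i)) Finset.univ_nonempty
  simp only [one_div] at hp
  refine ⟨inv_pos.1 (hp ▸ by positivity), ?_⟩
  rw [div_eq_mul_inv, hp, mul_inv_cancel_left₀ hN.ne']

theorem anisotropic_sobolev_troisi_general {ι : Type*} [Fintype ι] [DecidableEq ι]
    (pv a : ι → ℝ) (hpv : ∀ i, 1 ≤ pv i) (ha : ∀ i, 0 < a i)
    (p : ℝ) (hp : 1 / p = (1 / (Fintype.card ι : ℝ)) * ∑ i, 1 / pv i)
    (hpN : p < Fintype.card ι) :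
    ∃ c : ℝ, 0 < c ∧
      ∀ u : (ι → ℝ) → ℝ, (∀ x, 0 ≤ u x) → HasCompactSupport u →
        (∀ i, ContDiff ℝ 1 (fun x => u x ^ a i)) →
        (∫ x, u x ^ ((Fintype.card ι : ℝ) * ((1 / (Fintype.card ι : ℝ)) * ∑ i, a i) * p /
            ((Fintype.card ι : ℝ) - p))) ^ (((Fintype.card ι : ℝ) - p) / Fintype.card ι) ≤
          c * ∏ i,
            (∫ x, |fderiv ℝ (fun y => u y ^ a i) x (Pi.single i 1)| ^ pv i) ^
              (p / ((Fintype.card ι : ℝ) * pv i)) := by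
  obtain ⟨hp0, hsum⟩ := pos_and_sum_inv_eq_card_div
    (fun i => zero_lt_one.trans_le (hpv i)) hp hpN
  have hN : (0 : ℝ) < Fintype.card ι := hp0.trans hpN
  have hNp : (0 : ℝ) < Fintype.card ι - p := sub_pos.2 hpN
  have hsum1 : 1 < ∑ i, (pv i)⁻¹ := hsum ▸ (one_lt_div hp0).2 hpN
  have hq : (Fintype.card ι : ℝ) * ((1 / (Fintype.card ι : ℝ)) * ∑ i, a i) * p /
      ((Fintype.card ι : ℝ) - p) = troisiExponent a pv := by
    rw [troisiExponent, hsum]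
    field_simp
  have hexp : (∑ i, (pv i)⁻¹ - 1) * (p / Fintype.card ι) =
      ((Fintype.card ι : ℝ) - p) / Fintype.card ι := by
    rw [hsum]
    field_simp
  have hc := troisiConst_pos ha hpv hsum1
  refine ⟨troisiConst a pv ^ (p / Fintype.card ι), Real.rpow_pos_of_pos hc _,
    fun u hu0 huc hua => ?_⟩
  have hA : ∀ i, 0 ≤ ∫ x, |fderiv ℝ (fun y => u y ^ a i) x (Pi.single i 1)| ^ pv i :=
    fun i => integral_nonneg fun x => Real.rpow_nonneg (abs_nonneg _) _
  have hJ : 0 ≤ ∫ x, u x ^ troisiExponent a pv :=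
    integral_nonneg fun x => Real.rpow_nonneg (hu0 x) _
  have h := Real.rpow_le_rpow (Real.rpow_nonneg hJ _)
    (integral_troisiExponent_rpow_le ha hpv hsum1 hu0 huc hua) (div_pos hp0 hN).le
  rw [← Real.rpow_mul hJ, hexp, Real.mul_rpow hc.le
    (Finset.prod_nonneg fun i _ => Real.rpow_nonneg (hA i) _), ← Real.finsetProd_rpow _ _
    fun i _ => Real.rpow_nonneg (hA i) _] at h
  simpa only [hq, ← Real.rpow_mul (hA _), inv_mul_eq_div, div_div] using h

/-- Anisotropic Sobolev–Troisi embedding (Lemma 2.3): with `1/p = (1/N)∑ 1/pᵢ`,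
`α = (1/N)∑ αᵢ`, `p < N` and `p̄ = Nαp/(N-p)`, every nonnegative compactly
supported `u : ℝᴺ → ℝ` whose powers `u^{αᵢ}` are `C¹` satisfies
`(∫ u^p̄)^{(N-p)/N} ≤ c ∏ᵢ (∫ |∂ᵢ(u^{αᵢ})|^{pᵢ})^{p/(N pᵢ)}`. -/
theorem anisotropic_sobolev_troisi
    (N : ℕ) (hN : 2 ≤ N)
    (pv a : Fin N → ℝ) (hpv : ∀ i, 1 < pv i) (ha : ∀ i, 0 < a i)
    (p : ℝ) (hp : 1 / p = (1 / (N : ℝ)) * ∑ i, 1 / pv i) (hpN : p < N) :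
    ∃ c : ℝ, 0 < c ∧
      ∀ u : (Fin N → ℝ) → ℝ, (∀ x, 0 ≤ u x) → HasCompactSupport u →
        (∀ i, ContDiff ℝ 1 (fun x => u x ^ a i)) →
        (∫ x, u x ^ ((N : ℝ) * ((1 / (N : ℝ)) * ∑ i, a i) * p / ((N : ℝ) - p))) ^
            (((N : ℝ) - p) / N) ≤
          c * ∏ i,
            (∫ x, |fderiv ℝ (fun y => u y ^ a i) x (Pi.single i 1)| ^ pv i) ^
              (p / ((N : ℝ) * pv i)) := by
  simpa only [Fintype.card_fin] using anisotropic_sobolev_troisi_general pv a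
    (fun i => (hpv i).le) ha p (by rwa [Fintype.card_fin]) (by rwa [Fintype.card_fin])
end

section
/- For every m > 0 there exist constants γ ≥ 1 and c > 0, depending only on m, such that for every k > 0, every natural number j, and every real u ≥ 0 with u^m ≥ k_{j+1}^m, one has g₊(u^m, (k'_j)^m) := (1/m)∫_{(k'_j)^m}^{u^m} z^{1/m−1}(z − (k'_j)^m) dz ≥ γ^{-1}·2^{-cj}·(u^m − k_{j+1}^m)^{1+1/m}. -/
/-!
On `(a, b)` one has `z ^ (1/m - 1) = z ^ (1/m) / z ≥ (z - a) ^ (1/m) / b`, so `g₊(b, a)` is at least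
`(b - a) ^ (1/m + 2) / ((1 + 2m) b)`. This is the desired power of `b - a` as soon as `b` is bounded
by a multiple of `b - a`. For `a = (k'_j)^m` and `b ≥ k_{j+1}^m` the gap `b - a` is at least
`k^m / 2^(j+4)` while `a ≤ k^m`, so `b ≤ 17 · 2^j (b - a)`; the theorem holds with `c = 1`.
-/

open Set

theorem integral_sub_left_rpow {r : ℝ} (hr : -1 < r) (a b : ℝ) :
    ∫ z in a..b, (z - a) ^ r = (b - a) ^ (r + 1) / (r + 1) := by
  rw [intervalIntegral.integral_comp_sub_right (fun z ↦ z ^ r), integral_rpow (.inl hr), sub_self,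
    Real.zero_rpow (by linarith), sub_zero]

theorem sub_rpow_add_one_div_le_rpow_mul_sub {s a b z : ℝ} (hs : 0 ≤ s) (ha : 0 ≤ a)
    (hz : z ∈ Ioo a b) :
    (z - a) ^ (s + 1) / b ≤ z ^ (s - 1) * (z - a) := by
  have hza : 0 < z - a := sub_pos.2 hz.1
  have hz0 : 0 < z := ha.trans_lt hz.1
  calc (z - a) ^ (s + 1) / b
      = (z - a) ^ s / b * (z - a) := by rw [Real.rpow_add_one hza.ne', mul_div_right_comm]
    _ ≤ z ^ s / z * (z - a) := by
        gcongr
        · linarith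
        · exact hz.2.le
    _ = z ^ (s - 1) * (z - a) := by rw [Real.rpow_sub_one hz0.ne']

theorem sub_rpow_div_le_integral {s a b : ℝ} (hs : 0 < s) (ha : 0 ≤ a) (hab : a ≤ b) :
    (b - a) ^ (s + 2) / (s + 2) / b ≤ ∫ z in a..b, z ^ (s - 1) * (z - a) := by
  have hcont : Continuous fun z : ℝ ↦ (z - a) ^ (s + 1) / b :=
    ((continuous_sub_right a).rpow_const fun _ ↦ .inr (by linarith)).div_const b
  have hint : IntervalIntegrable (fun z ↦ z ^ (s - 1) * (z - a)) MeasureTheory.volume a b :=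
    (intervalIntegral.intervalIntegrable_rpow' (by linarith)).mul_continuousOn (by fun_prop)
  calc (b - a) ^ (s + 2) / (s + 2) / b
      = ∫ z in a..b, (z - a) ^ (s + 1) / b := by
        rw [intervalIntegral.integral_div, integral_sub_left_rpow (by linarith)]
        ring_nf
    _ ≤ ∫ z in a..b, z ^ (s - 1) * (z - a) :=
        intervalIntegral.integral_mono_on_of_le_Ioo hab (hcont.intervalIntegrable a b) hint
          fun _ hz ↦ sub_rpow_add_one_div_le_rpow_mul_sub hs.le ha hz

/-- The function `g₊(b, a)` of the paper, which measures how far `b` lies above `a`. It is meant for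
`0 < m` and `0 ≤ a ≤ b`; for `b < a` the integral is the oriented one. -/
noncomputable def gPlus (m b a : ℝ) : ℝ :=
  (1 / m) * ∫ z in a..b, z ^ (1 / m - 1) * (z - a)

theorem sub_rpow_div_le_gPlus {m a b : ℝ} (hm : 0 < m) (ha : 0 ≤ a) (hab : a ≤ b) :
    (b - a) ^ (1 / m + 2) / ((1 + 2 * m) * b) ≤ gPlus m b a :=
  calc (b - a) ^ (1 / m + 2) / ((1 + 2 * m) * b)
      = 1 / m * ((b - a) ^ (1 / m + 2) / (1 / m + 2) / b) := by field_simp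
    _ ≤ gPlus m b a := by
        unfold gPlus
        gcongr
        exact sub_rpow_div_le_integral (one_div_pos.2 hm) ha hab

theorem sub_rpow_div_le_gPlus_of_le_mul_sub {m a b C : ℝ} (hm : 0 < m) (ha : 0 ≤ a) (hab : a < b)
    (hC : b ≤ C * (b - a)) :
    (b - a) ^ (1 + 1 / m) / ((1 + 2 * m) * C) ≤ gPlus m b a := by
  have hgap : 0 < b - a := sub_pos.2 hab
  have hb : 0 < b := ha.trans_lt hab
  have hsplit : (b - a) ^ (1 / m + 2) = (b - a) ^ (1 + 1 / m) * (b - a) := by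
    rw [← Real.rpow_add_one hgap.ne']
    ring_nf
  calc (b - a) ^ (1 + 1 / m) / ((1 + 2 * m) * C)
      = (b - a) ^ (1 / m + 2) / ((1 + 2 * m) * (C * (b - a))) := by
        rw [hsplit, ← mul_assoc, mul_div_mul_right _ _ hgap.ne']
    _ ≤ (b - a) ^ (1 / m + 2) / ((1 + 2 * m) * b) := by gcongr
    _ ≤ gPlus m b a := sub_rpow_div_le_gPlus hm ha hab.le

/-- The `m`-th power `k_j^m` of the `j`-th De Giorgi level, as a function of `K = k^m`. -/
noncomputable def levelPow (K : ℝ) (j : ℕ) : ℝ :=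
  K - K / 2 ^ (j + 1)

/-- The `m`-th power `(k'_j)^m` of the level three quarters of the way from `k_j` to `k_{j+1}` (in
`m`-th powers), as a function of `K = k^m`. The inner mean is `k̄_j^m`. -/
noncomputable def innerLevelPow (K : ℝ) (j : ℕ) : ℝ :=
  ((levelPow K j + levelPow K (j + 1)) / 2 + levelPow K (j + 1)) / 2

theorem levelPow_succ_sub_innerLevelPow (K : ℝ) (j : ℕ) :
    levelPow K (j + 1) - innerLevelPow K j = K / 2 ^ (j + 4) := by
  simp only [innerLevelPow, levelPow, pow_succ]
  field_simp
  ring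

section

variable {K : ℝ} (hK : 0 ≤ K) (j : ℕ)
include hK

theorem levelPow_nonneg : 0 ≤ levelPow K j :=
  sub_nonneg.2 (div_le_self hK (one_le_pow₀ one_le_two))

theorem levelPow_le : levelPow K j ≤ K :=
  sub_le_self K (by positivity)

theorem innerLevelPow_nonneg : 0 ≤ innerLevelPow K j := by
  unfold innerLevelPow
  linarith [levelPow_nonneg hK j, levelPow_nonneg hK (j + 1)]

theorem innerLevelPow_le : innerLevelPow K j ≤ K := by
  unfold innerLevelPow
  linarith [levelPow_le hK j, levelPow_le hK (j + 1)]

theorem le_mul_sub_innerLevelPow {b : ℝ} (hb : levelPow K (j + 1) ≤ b) :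
    b ≤ 17 * 2 ^ j * (b - innerLevelPow K j) := by
  have hgap : K / 2 ^ (j + 4) ≤ b - innerLevelPow K j := by
    linarith [levelPow_succ_sub_innerLevelPow K j]
  have hgap_nonneg : 0 ≤ b - innerLevelPow K j := le_trans (by positivity) hgap
  have hpow : (1 : ℝ) ≤ 2 ^ j := one_le_pow₀ one_le_two
  calc b = (b - innerLevelPow K j) + innerLevelPow K j := by ring
    _ ≤ 1 * (b - innerLevelPow K j) + K := by linarith [innerLevelPow_le hK j]
    _ = 1 * (b - innerLevelPow K j) + 16 * 2 ^ j * (K / 2 ^ (j + 4)) := by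
        rw [pow_add]
        field_simp
        ring
    _ ≤ 2 ^ j * (b - innerLevelPow K j) + 16 * 2 ^ j * (b - innerLevelPow K j) := by gcongr
    _ = 17 * 2 ^ j * (b - innerLevelPow K j) := by ring

end

theorem sub_levelPow_succ_rpow_div_le_gPlus {m K b : ℝ} {j : ℕ} (hm : 0 < m) (hK : 0 < K)
    (hb : levelPow K (j + 1) ≤ b) :
    (b - levelPow K (j + 1)) ^ (1 + 1 / m) / ((1 + 2 * m) * (17 * 2 ^ j)) ≤
      gPlus m b (innerLevelPow K j) := by
  have hlt : innerLevelPow K j < levelPow K (j + 1) := by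
    rw [← sub_pos, levelPow_succ_sub_innerLevelPow]
    positivity
  calc (b - levelPow K (j + 1)) ^ (1 + 1 / m) / ((1 + 2 * m) * (17 * 2 ^ j))
      ≤ (b - innerLevelPow K j) ^ (1 + 1 / m) / ((1 + 2 * m) * (17 * 2 ^ j)) := by
        gcongr
    _ ≤ gPlus m b (innerLevelPow K j) :=
        sub_rpow_div_le_gPlus_of_le_mul_sub hm (innerLevelPow_nonneg hK.le j) (hlt.trans_le hb)
          (le_mul_sub_innerLevelPow hK.le j hb)

/-- Estimate (3.1): for `m > 0` there exist `γ ≥ 1` and `c > 0` depending only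
on `m` such that for every `k > 0`, `j ∈ ℕ` and `u ≥ 0` with `u^m ≥ k_{j+1}^m`,
`g₊(u^m, (k'_j)^m) = (1/m)∫_{(k'_j)^m}^{u^m} z^(1/m-1)(z-(k'_j)^m) dz
  ≥ γ⁻¹ 2^(-cj) (u^m - k_{j+1}^m)^(1+1/m)`. -/
theorem g_plus_lower_bound_levels (m : ℝ) (hm : 0 < m) :
    ∃ γ c : ℝ, 1 ≤ γ ∧ 0 < c ∧
      ∀ k : ℝ, 0 < k → ∀ j : ℕ, ∀ u : ℝ, 0 ≤ u →
      ∀ kjm kj1m kbm kpm : ℝ,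
        kjm = k ^ m - k ^ m / 2 ^ (j + 1) →
        kj1m = k ^ m - k ^ m / 2 ^ (j + 2) →
        kbm = (kjm + kj1m) / 2 →
        kpm = (kbm + kj1m) / 2 →
        kj1m ≤ u ^ m →
        γ⁻¹ * (2 : ℝ) ^ (-(c * (j : ℝ))) * (u ^ m - kj1m) ^ (1 + 1 / m) ≤
          (1 / m) * ∫ z in kpm..(u ^ m), z ^ (1 / m - 1) * (z - kpm) := by
  refine ⟨17 * (1 + 2 * m), 1, by linarith, one_pos, ?_⟩
  rintro k hk j u - _ _ _ _ rfl rfl rfl rfl hu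
  calc (17 * (1 + 2 * m))⁻¹ * (2 : ℝ) ^ (-(1 * (j : ℝ))) *
        (u ^ m - levelPow (k ^ m) (j + 1)) ^ (1 + 1 / m)
      = (u ^ m - levelPow (k ^ m) (j + 1)) ^ (1 + 1 / m) / ((1 + 2 * m) * (17 * 2 ^ j)) := by
        rw [one_mul, Real.rpow_neg zero_le_two, Real.rpow_natCast]
        field_simp
    _ ≤ gPlus m (u ^ m) (innerLevelPow (k ^ m) j) :=
        sub_levelPow_succ_rpow_div_le_gPlus hm (Real.rpow_pos_of_pos hk m) hu
end
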